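/- arXiv:2510.04993 — 2 statements merged into one kernel-verified Lean document; each statement's English description precedes it below -/
import Mathlib

section
/- For any invertible n×n matrix M over 𝔽₂ and any vector w ∈ 𝔽₂ⁿ, the permutation gate sending |v⟩ to |Mv + w⟩ is a Clifford gate. Conversely, every permutation gate that is Clifford is of this form for some invertible M and some w. -/
/-! Common framework: qubit gates, the Pauli group, the Clifford hierarchy,
permutation gates, Toffoli gates and staircase form, descending multiplications,
multilinear polynomial representations. -/

/-- Vectors in `𝔽₂ⁿ`, indexing computational basis states. -/
abbrev QV (n : ℕ) := Fin n → ZMod 2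

/-- `n`-qubit gates: `2ⁿ × 2ⁿ` complex matrices indexed by `𝔽₂ⁿ`. -/
abbrev QMat (n : ℕ) := Matrix (QV n) (QV n) ℂ

/-- Standard basis vector `eᵢ` of `𝔽₂ⁿ`. -/
def stdBasis (n : ℕ) (i : Fin n) : QV n := fun m => if m = i then 1 else 0

/-- The gate `X^u Z^z`, sending `|b⟩` to `(-1)^(z·b) |b+u⟩`. -/
noncomputable def XZGate (n : ℕ) (u z : QV n) : QMat n :=
  fun a b => if a = b + u then (-1 : ℂ) ^ (∑ i, (z i).val * (b i).val) else 0

/-- The Pauli group on `n` qubits: gates `c·P₁⊗⋯⊗Pₙ`, `c ∈ {±1, ±i}`,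
`Pᵢ ∈ {I,X,Y,Z}`, equivalently phases times `X^u Z^z`. -/
def PauliGroup (n : ℕ) : Set (QMat n) :=
  { P | ∃ (c : ℂ) (u z : QV n),
      (c = 1 ∨ c = -1 ∨ c = Complex.I ∨ c = -Complex.I) ∧ P = c • XZGate n u z }

/-- Level `k` of the Clifford hierarchy `𝒞ₖ` (level 1 is the Pauli group,
level 2 the Clifford group; level 0 is junk/empty). -/
def CliffordLevel (n : ℕ) : ℕ → Set (QMat n)
  | 0 => ∅
  | 1 => PauliGroup n
  | (k+2) => { U | U ∈ Matrix.unitaryGroup (QV n) ℂ ∧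
      ∀ P ∈ PauliGroup n, U * P * star U ∈ CliffordLevel n (k+1) }

/-- The permutation gate of a permutation `f` of `𝔽₂ⁿ`: sends `|v⟩` to `|f v⟩`. -/
noncomputable def permGate (n : ℕ) (f : QV n ≃ QV n) : QMat n :=
  fun a b => if a = f b then 1 else 0

/-- A diagonal gate. -/
def IsDiagonal (n : ℕ) (d : QMat n) : Prop := ∀ a b : QV n, a ≠ b → d a b = 0

/-- A gate is semi-Clifford if it equals `φ₁ d φ₂` for Clifford `φ₁, φ₂` and diagonal `d`. -/
def IsSemiClifford (n : ℕ) (U : QMat n) : Prop :=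
  ∃ φ₁ d φ₂ : QMat n, φ₁ ∈ CliffordLevel n 2 ∧ φ₂ ∈ CliffordLevel n 2 ∧
    IsDiagonal n d ∧ U = φ₁ * d * φ₂

/-- The underlying map of the Toffoli gate `TOF_{i,j,k}`: `v ↦ v + (vᵢvⱼ)·eₖ`. -/
def tofFun (n : ℕ) (i j k : Fin n) (v : QV n) : QV n :=
  fun m => if m = k then v m + v i * v j else v m

/-- A map on `𝔽₂ⁿ` is in staircase form if it is a product (applied left-to-right)
of pairwise distinct Toffoli gates `TOF_{i,j,k}` with `i<j<k` and with targets
nondecreasing in the order the gates are applied. -/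
def IsStaircase (n : ℕ) (g : QV n → QV n) : Prop :=
  ∃ L : List (Fin n × Fin n × Fin n),
    L.Nodup ∧
    (∀ t ∈ L, t.1 < t.2.1 ∧ t.2.1 < t.2.2) ∧
    List.Chain' (fun s t => s.2.2 ≤ t.2.2) L ∧
    g = fun v => L.foldl (fun w t => tofFun n t.1 t.2.1 t.2.2 w) v

/-- A descending multiplication on `𝔽₂ⁿ`: bilinear, associative, commutative,
`eᵢeᵢ = 0`, and for `i < j`, `eᵢeⱼ ∈ span{eₖ : k > j}`. -/
def IsDescendingMul (n : ℕ) (mul : QV n → QV n → QV n) : Prop :=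
  (∀ u v w : QV n, mul (u + v) w = mul u w + mul v w) ∧
  (∀ u v w : QV n, mul u (v + w) = mul u v + mul u w) ∧
  (∀ u v w : QV n, mul (mul u v) w = mul u (mul v w)) ∧
  (∀ u v : QV n, mul u v = mul v u) ∧
  (∀ i : Fin n, mul (stdBasis n i) (stdBasis n i) = 0) ∧
  (∀ i j : Fin n, i < j → ∀ m : Fin n, m ≤ j → mul (stdBasis n i) (stdBasis n j) m = 0)

/-- The product `∏_{i ∈ l} eᵢ` under a multiplication, for a list `l` (junk `0` on `[]`). -/
def dmProdList (n : ℕ) (mul : QV n → QV n → QV n) : List (Fin n) → QV n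
  | [] => 0
  | [i] => stdBasis n i
  | i :: j :: rest => mul (stdBasis n i) (dmProdList n mul (j :: rest))

/-- The product `∏_{i ∈ T} eᵢ` under a multiplication. -/
def dmProd (n : ℕ) (mul : QV n → QV n → QV n) (T : Finset (Fin n)) : QV n :=
  dmProdList n mul (T.sort (· ≤ ·))

/-- `g` is the map `∑_{i∈S} eᵢ ↦ ∑_{∅≠T⊆S} ∏_{i∈T} eᵢ` associated to a multiplication. -/
def dmPiSpec (n : ℕ) (mul : QV n → QV n → QV n) (g : QV n → QV n) : Prop :=
  ∀ S : Finset (Fin n),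
    g (∑ i ∈ S, stdBasis n i) = ∑ T ∈ S.powerset.erase ∅, dmProd n mul T

/-- The bilinear extension of `eᵢeⱼ := g(eᵢ+eⱼ) + eᵢ + eⱼ`. -/
def inducedMul (n : ℕ) (g : QV n → QV n) (u v : QV n) : QV n :=
  ∑ i : Fin n, ∑ j : Fin n,
    (u i * v j) • (g (stdBasis n i + stdBasis n j) + stdBasis n i + stdBasis n j)

/-- Coefficient of the monomial `∏_{i∈T} aᵢ` in the unique multilinear polynomial
over `𝔽₂` representing `g : 𝔽₂ⁿ → 𝔽₂` (Möbius inversion over `𝔽₂`). -/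
def mlCoeff (n : ℕ) (g : QV n → ZMod 2) (T : Finset (Fin n)) : ZMod 2 :=
  ∑ R ∈ T.powerset, g (∑ i ∈ R, stdBasis n i)

/-- Strictly lower triangular matrix. -/
def StrictLowerTri (n : ℕ) (A : Matrix (Fin n) (Fin n) (ZMod 2)) : Prop :=
  ∀ p q : Fin n, p ≤ q → A p q = 0

/-- Multiplication of basis vectors for the gate `U_k`: the basis of `𝔽₂^(2^k-1)` is
indexed by nonempty subsets `S ⊆ [k]`, encoded as indices `a` via the binary digits of
`a+1`; `e_S e_T = e_{S∪T}` if `S ∩ T = ∅` and `e_S e_T = 0` otherwise. -/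
def ukBasisMul (k : ℕ) (a b : Fin (2 ^ k - 1)) : QV (2 ^ k - 1) :=
  if (a.val + 1) &&& (b.val + 1) = 0 then
    (if h : a.val + b.val + 1 < 2 ^ k - 1 then stdBasis (2 ^ k - 1) ⟨a.val + b.val + 1, h⟩
     else 0)
  else 0

/-- The descending multiplication defining `U_k`, extended bilinearly. -/
def ukMul (k : ℕ) (u v : QV (2 ^ k - 1)) : QV (2 ^ k - 1) :=
  ∑ a : Fin (2 ^ k - 1), ∑ b : Fin (2 ^ k - 1), (u a * v b) • ukBasisMul k a b

/-!
Conjugation by the permutation gate of `f` moves the `(a, b)` entry of a matrix to position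
`(f a, f b)`, and the gate `X^u Z^z` is supported exactly on the entries `(b + u, b)`. So if the
gate of `f` is Clifford, then conjugating `X^u` shows that `f (v + u) - f v` does not depend on
`v`, which makes `f - f 0` additive, hence `𝔽₂`-linear. Conversely, for `f v = M v + w` the sign
`(-1)^(z·b)` at `b` reads `(-1)^(z M⁻¹·w) (-1)^(z M⁻¹·f b)`, so that `X^u Z^z` is conjugated to
`± X^(M u) Z^(z M⁻¹)`.
-/

open Matrix

section Affine

theorem exists_addMonoidHom_of_map_add_right {A B : Type*} [AddZeroClass A] [AddGroup B]
    {f : A → B} (hf : ∀ u, ∃ u', ∀ v, f (v + u) = f v + u') :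
    ∃ g : A →+ B, ∀ v, f v = f 0 + g v := by
  have map_add_right (v u : A) : f (v + u) = f v + (-f 0 + f u) := by
    obtain ⟨u', hu'⟩ := hf u
    have map_u : f u = f 0 + u' := by rw [← hu' 0, zero_add]
    rw [hu' v, map_u, neg_add_cancel_left]
  let g : A →+ B := AddMonoidHom.mk' (fun v ↦ -f 0 + f v) fun v u ↦ by
    rw [map_add_right, add_assoc]
  exact ⟨g, fun v ↦ (add_neg_cancel_left (f 0) (f v)).symm⟩

theorem exists_mulVec_add_of_map_add_right {k : ℕ} {ι κ : Type*} [Fintype ι]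
    {f : (ι → ZMod k) → κ → ZMod k} (hf : ∀ u, ∃ u', ∀ v, f (v + u) = f v + u') :
    ∃ (M : Matrix κ ι (ZMod k)) (w : κ → ZMod k), ∀ v, f v = M *ᵥ v + w := by
  classical
  obtain ⟨g, hg⟩ := exists_addMonoidHom_of_map_add_right hf
  refine ⟨LinearMap.toMatrix' (g.toZModLinearMap k), f 0, fun v ↦ ?_⟩
  rw [LinearMap.toMatrix'_mulVec, AddMonoidHom.coe_toZModLinearMap, hg v, add_comm]

theorem bijective_mulVec_add_iff_isUnit {ι R : Type*} [Fintype ι] [DecidableEq ι] [CommRing R]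
    {M : Matrix ι ι R} (w : ι → R) :
    Function.Bijective (fun v ↦ M *ᵥ v + w) ↔ IsUnit M := by
  have bijective_translate : Function.Bijective (fun v ↦ M *ᵥ v + w) ↔
      Function.Bijective M.mulVec :=
    Function.Bijective.of_comp_iff' (Equiv.addRight w).bijective M.mulVec
  rw [bijective_translate]
  exact ⟨fun h ↦ mulVec_surjective_iff_isUnit.1 h.2,
    fun h ↦ ⟨mulVec_injective_of_isUnit h, mulVec_surjective_iff_isUnit.2 h⟩⟩

end Affine

section Sign

/-- The additive character `x ↦ (-1)^x` of `𝔽₂`, which gives the entries of the gates `X^u Z^z`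
their signs. -/
noncomputable def signChar : AddChar (ZMod 2) ℂ :=
  AddChar.zmodChar 2 neg_one_sq

theorem signChar_eq_one_or (x : ZMod 2) : signChar x = 1 ∨ signChar x = -1 :=
  neg_one_pow_eq_or ℂ x.val

theorem signChar_dotProduct {ι : Type*} [Fintype ι] (z b : ι → ZMod 2) :
    signChar (z ⬝ᵥ b) = (-1) ^ ∑ i, (z i).val * (b i).val := by
  have cast_sum : ((∑ i, (z i).val * (b i).val : ℕ) : ZMod 2) = z ⬝ᵥ b := by
    simp [dotProduct]
  rw [← cast_sum]
  exact AddChar.zmodChar_apply' neg_one_sq _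

end Sign

section Pauli

variable {n : ℕ}

theorem xzGate_apply (u z a b : QV n) :
    XZGate n u z a b = if a = b + u then signChar (z ⬝ᵥ b) else 0 := by
  rw [signChar_dotProduct, XZGate]

theorem xzGate_apply_ne_zero_iff {u z a b : QV n} : XZGate n u z a b ≠ 0 ↔ a = b + u := by
  simp [XZGate]

theorem neg_mem_pauliGroup {P : QMat n} (hP : P ∈ PauliGroup n) : -P ∈ PauliGroup n := by
  obtain ⟨c, u, z, hc, rfl⟩ := hP
  refine ⟨-c, u, z, ?_, (neg_smul _ _).symm⟩
  rcases hc with rfl | rfl | rfl | rfl <;> simp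

theorem signChar_smul_mem_pauliGroup (x : ZMod 2) {P : QMat n} (hP : P ∈ PauliGroup n) :
    signChar x • P ∈ PauliGroup n := by
  rcases signChar_eq_one_or x with hx | hx
  · rwa [hx, one_smul]
  · rw [hx, neg_one_smul]
    exact neg_mem_pauliGroup hP

theorem mem_cliffordLevel_two {U : QMat n} :
    U ∈ CliffordLevel n 2 ↔
      U ∈ unitaryGroup (QV n) ℂ ∧ ∀ P ∈ PauliGroup n, U * P * star U ∈ PauliGroup n :=
  Iff.rfl

end Pauli

section PermGate

variable {n : ℕ}

theorem permGate_eq_permMatrix (f : QV n ≃ QV n) :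
    permGate n f = Equiv.Perm.permMatrix ℂ f.symm := by
  ext a b
  simp [permGate, Equiv.symm_apply_eq]

theorem permGate_mul_mul_star (f : QV n ≃ QV n) (P : QMat n) :
    permGate n f * P * star (permGate n f) = P.submatrix f.symm f.symm := by
  rw [permGate_eq_permMatrix, star_eq_conjTranspose, conjTranspose_permMatrix,
    PEquiv.toMatrix_toPEquiv_mul, PEquiv.mul_toMatrix_toPEquiv]
  rfl

theorem permGate_mem_unitaryGroup (f : QV n ≃ QV n) :
    permGate n f ∈ unitaryGroup (QV n) ℂ := by
  have gate_mul_star := permGate_mul_mul_star f 1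
  rwa [mul_one, submatrix_one_equiv, ← mem_unitaryGroup_iff] at gate_mul_star

theorem permGate_conj_xzGate {f : QV n ≃ QV n} {M : Matrix (Fin n) (Fin n) (ZMod 2)} {w : QV n}
    (hM : IsUnit M) (hf : ∀ v, f v = M *ᵥ v + w) (u z : QV n) :
    permGate n f * XZGate n u z * star (permGate n f) =
      signChar ((z ᵥ* M⁻¹) ⬝ᵥ w) • XZGate n (M *ᵥ u) (z ᵥ* M⁻¹) := by
  have map_add (v : QV n) : f (v + u) = f v + M *ᵥ u := by
    rw [hf, hf, mulVec_add, add_right_comm]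
  have dotProduct_map (b : QV n) : (z ᵥ* M⁻¹) ⬝ᵥ f b = z ⬝ᵥ b + (z ᵥ* M⁻¹) ⬝ᵥ w := by
    rw [hf, dotProduct_add, dotProduct_mulVec, vecMul_vecMul,
      nonsing_inv_mul _ ((isUnit_iff_isUnit_det M).1 hM), vecMul_one]
  have sign_eq (b : QV n) : signChar (z ⬝ᵥ b) =
      signChar ((z ᵥ* M⁻¹) ⬝ᵥ w) * signChar ((z ᵥ* M⁻¹) ⬝ᵥ f b) := by
    rw [← AddChar.map_add_eq_mul, dotProduct_map, add_left_comm, CharTwo.add_self_eq_zero,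
      add_zero]
  ext a b
  obtain ⟨a, rfl⟩ := f.surjective a
  obtain ⟨b, rfl⟩ := f.surjective b
  have shift_iff : f a = f b + M *ᵥ u ↔ a = b + u := by rw [← map_add, f.apply_eq_iff_eq]
  simp only [permGate_mul_mul_star, submatrix_apply, f.symm_apply_apply, Matrix.smul_apply,
    smul_eq_mul, xzGate_apply, shift_iff, sign_eq b, mul_ite, mul_zero]

theorem map_add_right_of_permGate_mem_cliffordLevel_two {f : QV n ≃ QV n}
    (hf : permGate n f ∈ CliffordLevel n 2) (u : QV n) : ∃ u', ∀ v, f (v + u) = f v + u' := by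
  obtain ⟨c, u', z', -, conj_eq⟩ :=
    (mem_cliffordLevel_two.1 hf).2 (XZGate n u 0) ⟨1, u, 0, .inl rfl, (one_smul _ _).symm⟩
  refine ⟨u', fun v ↦ ?_⟩
  have entry_eq : XZGate n u 0 (v + u) v = c * XZGate n u' z' (f (v + u)) (f v) := by
    simpa [permGate_mul_mul_star] using congrFun₂ conj_eq (f (v + u)) (f v)
  have entry_ne_zero : XZGate n u 0 (v + u) v ≠ 0 := xzGate_apply_ne_zero_iff.2 rfl
  exact xzGate_apply_ne_zero_iff.1 (right_ne_zero_of_mul (entry_eq ▸ entry_ne_zero))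

theorem permGate_mem_cliffordLevel_two_iff {f : QV n ≃ QV n} :
    permGate n f ∈ CliffordLevel n 2 ↔
      ∃ (M : Matrix (Fin n) (Fin n) (ZMod 2)) (w : QV n),
        IsUnit M ∧ ∀ v, f v = M *ᵥ v + w := by
  constructor
  · intro hf
    obtain ⟨M, w, hMw⟩ := exists_mulVec_add_of_map_add_right
      (map_add_right_of_permGate_mem_cliffordLevel_two hf)
    refine ⟨M, w, (bijective_mulVec_add_iff_isUnit w).1 ?_, hMw⟩
    exact (funext hMw : ⇑f = _) ▸ f.bijective
  · rintro ⟨M, w, hM, hMw⟩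
    refine mem_cliffordLevel_two.2 ⟨permGate_mem_unitaryGroup f, ?_⟩
    rintro _ ⟨c, u, z, hc, rfl⟩
    rw [mul_smul_comm, smul_mul_assoc, permGate_conj_xzGate hM hMw, smul_comm]
    exact signChar_smul_mem_pauliGroup _ ⟨c, _, _, hc, rfl⟩

end PermGate

/-- For invertible `M` over `𝔽₂` and any `w`, the permutation gate
`|v⟩ ↦ |Mv + w⟩` is Clifford; conversely every Clifford permutation gate has this form. -/
theorem stmt12 (n : ℕ) (hn : 1 ≤ n) :
    (∀ M : Matrix (Fin n) (Fin n) (ZMod 2), IsUnit M → ∀ w : QV n,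
      ∃ f : QV n ≃ QV n, (∀ v, f v = M.mulVec v + w) ∧
        permGate n f ∈ CliffordLevel n 2) ∧
    (∀ f : QV n ≃ QV n, permGate n f ∈ CliffordLevel n 2 →
      ∃ (M : Matrix (Fin n) (Fin n) (ZMod 2)) (w : QV n),
        IsUnit M ∧ ∀ v, f v = M.mulVec v + w) := by
  refine ⟨fun M hM w ↦ ?_, fun f ↦ permGate_mem_cliffordLevel_two_iff.1⟩
  let f : QV n ≃ QV n := Equiv.ofBijective _ ((bijective_mulVec_add_iff_isUnit w).2 hM)
  have hf (v : QV n) : f v = M *ᵥ v + w := rfl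
  exact ⟨f, hf, permGate_mem_cliffordLevel_two_iff.2 ⟨M, w, hM, hf⟩⟩
end

section
/- The smallest number of qubits n for which there exists a permutation gate in 𝒞₃ that is not semi-Clifford is n = 7; that is, for every n ≤ 6 every permutation gate in 𝒞₃ on n qubits is semi-Clifford, and for n = 7 there exists a permutation gate in 𝒞₃ that is not semi-Clifford. -/
namespace PermutationGate

/-!
Conjugating the translations by a permutation `f ∈ 𝒞₃` gives affine maps. For `F = f - f 0` this
says that the defect `F (u + v) - F u - F v` is a bilinear function of `F u` and `F v`: a
commutative, associative multiplication on `𝔽₂ⁿ` whose squares vanish. A nonzero product `xyz`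
would make `x, y, z, xy, xz, yz, xyz` linearly independent, so for `n ≤ 6` all triple products
vanish. Then every product lies in the annihilator `W` of the multiplication, and up to a linear
map `F` translates each coset of `W` by an element of `W`. In coordinates adapted to `W` such a
shear is diagonalised by Hadamard gates.

For `n = 7`, the algebra with basis `x, y, z, xy, xz, yz, xyz` comes from a permutation in `𝒞₃`. A
semi-Clifford gate on `7` qubits conjugates at least `2⁷` Paulis (up to phase) to Paulis, since a
diagonal gate fixes all `Z^z`; this permutation does so only for the Paulis `X^u Z^w` in which `u`
is a multiple of the last basis vector and `w` is supported on the first three coordinates, and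
there are only `2⁴` of these.
-/

/-! ### The sign character -/

/-- The sign character `x ↦ (-1)ˣ` of `𝔽₂`. -/
noncomputable def signChar : AddChar (ZMod 2) ℂ :=
  AddChar.zmodChar 2 (by norm_num : (-1 : ℂ) ^ 2 = 1)

theorem eq_zero_or_one : ∀ x : ZMod 2, x = 0 ∨ x = 1 := by
  decide

theorem signChar_one : signChar 1 = -1 := by
  simp [signChar, AddChar.zmodChar_apply, ZMod.val_one]

theorem signChar_injective : Function.Injective signChar := by
  intro x y
  obtain rfl | rfl := eq_zero_or_one x <;> obtain rfl | rfl := eq_zero_or_one y <;>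
    norm_num [signChar_one]

theorem star_signChar (x : ZMod 2) : star (signChar x) = signChar x := by
  obtain rfl | rfl := eq_zero_or_one x <;> simp [signChar_one]

theorem signChar_ne_zero (x : ZMod 2) : signChar x ≠ 0 :=
  (signChar.val_isUnit x).ne_zero

theorem signChar_mul_self (x : ZMod 2) : signChar x * signChar x = 1 := by
  rw [← AddChar.map_add_eq_mul, CharTwo.add_self_eq_zero, AddChar.map_zero_eq_one]

theorem signChar_sum {ι : Type*} (s : Finset ι) (f : ι → ZMod 2) :
    signChar (∑ i ∈ s, f i) = ∏ i ∈ s, signChar (f i) := by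
  induction s using Finset.cons_induction <;> simp [AddChar.map_add_eq_mul, *]

theorem neg_one_pow_val_mul_val (x y : ZMod 2) :
    (-1 : ℂ) ^ (x.val * y.val) = signChar (x * y) := by
  obtain rfl | rfl := eq_zero_or_one x <;> obtain rfl | rfl := eq_zero_or_one y <;>
    simp [signChar_one, ZMod.val_one]

/-! ### Affine and quadratic functions -/

section Affine

variable {A B C : Type*} [AddCommGroup A] [AddCommGroup B] [AddCommGroup C]

/-- Affine functions between abelian groups, i.e. homomorphisms up to a constant. -/
def IsAffine (f : A → B) : Prop :=
  ∀ a b, f (a + b) + f 0 = f a + f b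

/-- Functions of degree at most two: all differences `b ↦ f (b + u) - f b` are affine. -/
def IsQuadratic (f : A → B) : Prop :=
  ∀ u, IsAffine fun b => f (b + u) - f b

theorem isAffine_of_addMonoidHomClass {F : Type*} [FunLike F A B] [AddMonoidHomClass F A B]
    (f : F) : IsAffine f := by
  intro a b
  rw [map_add, map_zero, add_zero]

theorem isAffine_const (c : B) : IsAffine fun _ : A => c :=
  fun _ _ => rfl

theorem isAffine_addRight (c : A) : IsAffine (Equiv.addRight c) := by
  intro a b
  simp only [Equiv.coe_addRight]
  abel

theorem IsAffine.add {f g : A → B} (hf : IsAffine f) (hg : IsAffine g) :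
    IsAffine fun a => f a + g a := by
  intro a b
  calc f (a + b) + g (a + b) + (f 0 + g 0) = f (a + b) + f 0 + (g (a + b) + g 0) := by abel
    _ = f a + g a + (f b + g b) := by rw [hf, hg]; abel

theorem IsAffine.map_sub {f : A → B} (hf : IsAffine f) (a b : A) :
    f (a - b) - f 0 = f a - f b := by
  have h := hf (a - b) b
  rw [sub_add_cancel] at h
  rw [sub_eq_sub_iff_add_eq_add, h]

theorem IsAffine.comp {g : B → C} {f : A → B} (hg : IsAffine g) (hf : IsAffine f) :
    IsAffine (g ∘ f) := by
  intro a b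
  have h := hg.map_sub (f a + f b) (f 0)
  rw [← hf a b, add_sub_cancel_right, hf a b, sub_eq_sub_iff_add_eq_add, hg] at h
  exact h

theorem IsAffine.symm {f : A ≃ B} (hf : IsAffine f) : IsAffine f.symm := by
  intro a b
  apply f.injective
  have h (x y) : f (x + y) = f x + f y - f 0 := eq_sub_of_add_eq (hf x y)
  simp only [h, Equiv.apply_symm_apply, add_zero]

theorem IsAffine.comp_isQuadratic {g : B → C} {f : A → B} (hg : IsAffine g)
    (hf : IsQuadratic f) : IsQuadratic (g ∘ f) := by
  intro u
  have h := (hg.comp (hf u)).add (isAffine_const (-g 0))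
  simpa only [Function.comp_apply, ← sub_eq_add_neg (g _), hg.map_sub] using h

theorem IsAffine.exists_dotProduct {ι : Type*} [Fintype ι] {p : ℕ} {f : (ι → ZMod p) → ZMod p}
    (hf : IsAffine f) : ∃ z : ι → ZMod p, ∀ b, f b = z ⬝ᵥ b + f 0 := by
  classical
  let l : (ι → ZMod p) →+ ZMod p := AddMonoidHom.mk' (fun b => f b - f 0) fun a b => by
    rw [eq_sub_of_add_eq (hf a b)]
    abel
  refine ⟨(dotProductEquiv (ZMod p) ι).symm (l.toZModLinearMap p), fun b => ?_⟩
  rw [← dotProductEquiv_apply_apply, LinearEquiv.apply_symm_apply]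
  exact (sub_add_cancel _ _).symm

end Affine

/-! ### Monomial matrices -/

section Monomial

variable {α R : Type*} [DecidableEq α]

/-- The monomial matrix sending the basis vector `|b⟩` to `s b • |h b⟩`. -/
def monomialMatrix [Zero R] (h : α → α) (s : α → R) : Matrix α α R :=
  Matrix.of fun a b => if a = h b then s b else 0

theorem monomialMatrix_apply [Zero R] (h : α → α) (s : α → R) (a b : α) :
    monomialMatrix h s a b = if a = h b then s b else 0 :=
  rfl

theorem monomialMatrix_id [Zero R] (s : α → R) :
    monomialMatrix id s = Matrix.diagonal s := by
  ext a b
  simp +contextual [monomialMatrix_apply, Matrix.diagonal_apply]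

theorem monomialMatrix_mul [Fintype α] [NonUnitalNonAssocSemiring R] (h k : α → α)
    (s t : α → R) :
    monomialMatrix h s * monomialMatrix k t =
      monomialMatrix (h ∘ k) fun b => s (k b) * t b := by
  ext a b
  simp [monomialMatrix_apply, Matrix.mul_apply]

theorem smul_monomialMatrix [MulZeroClass R] (c : R) (h : α → α) (s : α → R) :
    c • monomialMatrix h s = monomialMatrix h fun b => c * s b := by
  ext a b
  simp [monomialMatrix_apply]

theorem star_monomialMatrix [AddMonoid R] [StarAddMonoid R] (h : α ≃ α) (s : α → R) :
    star (monomialMatrix h s) = monomialMatrix h.symm fun b => star (s (h.symm b)) := by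
  ext a b
  simp only [Matrix.star_apply, monomialMatrix_apply, ← Equiv.symm_apply_eq, apply_ite star,
    star_zero]
  split_ifs with hab hba hba
  all_goals simp_all [eq_comm]

theorem monomialMatrix_inj [Zero R] {h k : α → α} {s t : α → R} (hs : ∀ b, s b ≠ 0) :
    monomialMatrix h s = monomialMatrix k t ↔ h = k ∧ s = t := by
  refine ⟨fun e => ?_, fun ⟨hk, hst⟩ => by rw [hk, hst]⟩
  have key (b) : h b = k b ∧ s b = t b := by
    have hb := congrFun₂ e (h b) b
    simp only [monomialMatrix_apply, if_true] at hb
    split_ifs at hb with hk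
    · exact ⟨hk, hb⟩
    · exact absurd hb (hs b)
  exact ⟨funext fun b => (key b).1, funext fun b => (key b).2⟩

theorem monomialMatrix_mem_unitaryGroup [Fintype α] [CommRing R] [StarRing R] (h : α ≃ α)
    {s : α → R} (hs : ∀ b, s b * star (s b) = 1) :
    monomialMatrix h s ∈ Matrix.unitaryGroup α R := by
  rw [Matrix.mem_unitaryGroup_iff, star_monomialMatrix, monomialMatrix_mul,
    Equiv.self_comp_symm, monomialMatrix_id, ← Matrix.diagonal_one]
  simp only [hs]

end Monomial

variable {n : ℕ}

theorem permGate_eq_monomialMatrix (f : QV n ≃ QV n) :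
    permGate n f = monomialMatrix f fun _ => 1 :=
  rfl

theorem permGate_mul (f g : QV n ≃ QV n) :
    permGate n f * permGate n g = permGate n (g.trans f) := by
  simp only [permGate_eq_monomialMatrix, monomialMatrix_mul, one_mul, Equiv.coe_trans]

theorem star_permGate (f : QV n ≃ QV n) : star (permGate n f) = permGate n f.symm := by
  simp only [permGate_eq_monomialMatrix, star_monomialMatrix, star_one]

/-! ### Pauli gates -/

theorem XZGate_eq_monomialMatrix (u z : QV n) :
    XZGate n u z = monomialMatrix (· + u) fun b => signChar (z ⬝ᵥ b) := by
  ext a b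
  simp only [XZGate, monomialMatrix_apply, dotProduct, signChar_sum, ← neg_one_pow_val_mul_val,
    Finset.prod_pow_eq_pow_sum]

theorem XZGate_zero_left (z : QV n) :
    XZGate n 0 z = Matrix.diagonal fun b => signChar (z ⬝ᵥ b) := by
  simp only [XZGate_eq_monomialMatrix, add_zero, ← monomialMatrix_id]
  rfl

theorem XZGate_zero_right (u : QV n) : XZGate n u 0 = permGate n (Equiv.addRight u) := by
  simp only [XZGate_eq_monomialMatrix, permGate_eq_monomialMatrix, zero_dotProduct,
    AddChar.map_zero_eq_one, Equiv.coe_addRight]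

theorem mem_pauliGroup_iff {P : QMat n} :
    P ∈ PauliGroup n ↔ ∃ (c : ℂ) (u z : QV n), c ^ 4 = 1 ∧ P = c • XZGate n u z := by
  have phase (c : ℂ) : (c = 1 ∨ c = -1 ∨ c = Complex.I ∨ c = -Complex.I) ↔ c ^ 4 = 1 := by
    have hI := Complex.I_sq
    have factor : c ^ 4 - 1 = (c - 1) * ((c + 1) * ((c - Complex.I) * (c + Complex.I))) := by
      linear_combination (c ^ 2 - 1) * hI
    rw [← sub_eq_zero (a := c ^ 4), factor]
    simp only [mul_eq_zero, sub_eq_zero, add_eq_zero_iff_eq_neg]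
  simp only [PauliGroup, Set.mem_ofPred_eq, phase]

theorem XZGate_mem_pauliGroup (u z : QV n) : XZGate n u z ∈ PauliGroup n :=
  mem_pauliGroup_iff.2 ⟨1, u, z, one_pow 4, (one_smul _ _).symm⟩

theorem mul_signChar_pow_four {c : ℂ} (hc : c ^ 4 = 1) (x : ZMod 2) :
    (c * signChar x) ^ 4 = 1 := by
  rw [mul_pow, hc, one_mul, pow_mul (signChar x) 2 2, pow_two (signChar x), signChar_mul_self,
    one_pow]

theorem mul_star_eq_one_of_pow_four {c : ℂ} (hc : c ^ 4 = 1) : c * star c = 1 := by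
  rw [Complex.star_def, Complex.mul_conj', Complex.norm_eq_one_of_pow_eq_one hc four_ne_zero]
  norm_num

theorem mem_pauliGroup_iff_monomialMatrix {P : QMat n} :
    P ∈ PauliGroup n ↔ ∃ (c : ℂ) (u : QV n) (F : QV n → ZMod 2), c ^ 4 = 1 ∧ IsAffine F ∧
      P = monomialMatrix (· + u) fun b => c * signChar (F b) := by
  simp only [mem_pauliGroup_iff, XZGate_eq_monomialMatrix, smul_monomialMatrix]
  constructor
  · rintro ⟨c, u, z, hc, rfl⟩
    exact ⟨c, u, (z ⬝ᵥ ·), hc, fun a b => by simp, rfl⟩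
  · rintro ⟨c, u, F, hc, hF, rfl⟩
    obtain ⟨z, hz⟩ := hF.exists_dotProduct
    refine ⟨c * signChar (F 0), u, z, mul_signChar_pow_four hc _, ?_⟩
    congr! 2 with b
    rw [hz b, AddChar.map_add_eq_mul]
    ring

theorem smul_XZGate_inj {c c' : ℂ} {u u' z z' : QV n} (hc : c ≠ 0) :
    c • XZGate n u z = c' • XZGate n u' z' ↔ c = c' ∧ u = u' ∧ z = z' := by
  refine ⟨fun e => ?_, by rintro ⟨rfl, rfl, rfl⟩; rfl⟩
  simp only [XZGate_eq_monomialMatrix, smul_monomialMatrix] at e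
  obtain ⟨htrans, hsign⟩ :=
    (monomialMatrix_inj fun b => mul_ne_zero hc (signChar_ne_zero _)).1 e
  have hcc : c = c' := by simpa using congrFun hsign 0
  subst hcc
  refine ⟨rfl, by simpa using congrFun htrans 0, funext fun i => signChar_injective ?_⟩
  simpa [hc] using congrFun hsign (Pi.single i 1)

theorem finite_pauliGroup (n : ℕ) : (PauliGroup n).Finite := by
  have hphases : {c : ℂ | c ^ 4 = 1}.Finite := by
    simpa [Polynomial.mem_nthRoots] using (Polynomial.nthRootsFinset 4 (1 : ℂ)).finite_toSet
  refine ((hphases.prod Set.finite_univ).image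
    fun p : ℂ × QV n × QV n => p.1 • XZGate n p.2.1 p.2.2).subset fun P hP => ?_
  obtain ⟨c, u, z, hc, rfl⟩ := mem_pauliGroup_iff.1 hP
  exact ⟨(c, u, z), ⟨hc, Set.mem_univ _⟩, rfl⟩

/-! ### Clifford gates -/

theorem mul_mem_cliffordLevel_two {U V : QMat n} (hU : U ∈ CliffordLevel n 2)
    (hV : V ∈ CliffordLevel n 2) : U * V ∈ CliffordLevel n 2 := by
  refine ⟨mul_mem hU.1 hV.1, fun P hP => ?_⟩
  simpa only [star_mul, mul_assoc] using hU.2 _ (hV.2 P hP)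

theorem star_mem_cliffordLevel_two {U : QMat n} (hU : U ∈ CliffordLevel n 2) :
    star U ∈ CliffordLevel n 2 := by
  have hU1 : star U * U = 1 := Matrix.mem_unitaryGroup_iff'.1 hU.1
  have cancel (P : QMat n) : star U * (U * P * star U) * star (star U) = P := by
    rw [star_star, mul_assoc U, ← mul_assoc, ← mul_assoc, hU1, one_mul, mul_assoc, hU1, mul_one]
  have hinj : Set.InjOn (fun P => U * P * star U) (PauliGroup n) :=
    (Function.LeftInverse.injective (g := fun P => star U * P * star (star U)) cancel).injOn
  refine ⟨Unitary.star_mem hU.1, fun P hP => ?_⟩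
  obtain ⟨Q, hQ, rfl⟩ :=
    (((finite_pauliGroup n).injOn_iff_bijOn_of_mapsTo hU.2).1 hinj).surjOn hP
  simp only [cancel]
  exact hQ

theorem monomialMatrix_mem_cliffordLevel_two {h : QV n ≃ QV n} (hh : IsAffine h) {c : ℂ}
    (hc : c ^ 4 = 1) {Q : QV n → ZMod 2} (hQ : IsQuadratic Q) :
    (monomialMatrix h fun b => c * signChar (Q b)) ∈ CliffordLevel n 2 := by
  have unit_phase (b) : c * signChar (Q b) * star (c * signChar (Q b)) = 1 :=
    mul_star_eq_one_of_pow_four (mul_signChar_pow_four hc _)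
  refine ⟨monomialMatrix_mem_unitaryGroup h unit_phase, fun P hP => ?_⟩
  obtain ⟨c', u, F, hc', hF, rfl⟩ := mem_pauliGroup_iff_monomialMatrix.1 hP
  refine mem_pauliGroup_iff_monomialMatrix.2
    ⟨c', h u - h 0, _, hc', ((hQ u).add hF).comp hh.symm, ?_⟩
  rw [star_monomialMatrix, monomialMatrix_mul, monomialMatrix_mul]
  congr! 2 with b b
  · simp only [Function.comp_apply, eq_sub_of_add_eq (hh _ _), Equiv.apply_symm_apply,
      add_sub_assoc]
  · simp only [Function.comp_apply, star_mul', star_signChar, CharTwo.sub_eq_add,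
      AddChar.map_add_eq_mul]
    linear_combination (c' * signChar (Q (h.symm b + u)) * signChar (Q (h.symm b)) *
      signChar (F (h.symm b))) * mul_star_eq_one_of_pow_four hc

theorem permGate_mem_cliffordLevel_two_iff {h : QV n ≃ QV n} :
    permGate n h ∈ CliffordLevel n 2 ↔ IsAffine h := by
  constructor
  · intro hh u v
    have hu := hh.2 _ (XZGate_mem_pauliGroup u 0)
    rw [XZGate_zero_right, star_permGate, permGate_mul, permGate_mul] at hu
    obtain ⟨c, w, F, -, -, e⟩ := mem_pauliGroup_iff_monomialMatrix.1 hu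
    have translation := ((monomialMatrix_inj fun _ => one_ne_zero).1 e).1
    have h0 := congrFun translation (h 0)
    have hv := congrFun translation (h v)
    simp only [Equiv.coe_trans, Function.comp_apply, Equiv.symm_apply_apply, Equiv.coe_addRight,
      zero_add] at h0 hv
    rw [add_comm u v, hv, h0]
    abel
  · intro hh
    have h := monomialMatrix_mem_cliffordLevel_two hh (one_pow 4) (Q := 0) fun _ _ _ => by simp
    simp only [Pi.zero_apply, AddChar.map_zero_eq_one, mul_one] at h
    exact h

theorem permGate_mem_cliffordLevel_three {f : QV n ≃ QV n}
    (htrans : ∀ u, IsAffine fun x => f (f.symm x + u)) (hquad : IsQuadratic f.symm) :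
    permGate n f ∈ CliffordLevel n 3 := by
  refine ⟨monomialMatrix_mem_unitaryGroup f fun _ => by simp, fun P hP => ?_⟩
  obtain ⟨c, u, F, hc, hF, rfl⟩ := mem_pauliGroup_iff_monomialMatrix.1 hP
  have h := monomialMatrix_mem_cliffordLevel_two
    (h := (f.symm.trans (Equiv.addRight u)).trans f) (htrans u) hc (hF.comp_isQuadratic hquad)
  rw [permGate_eq_monomialMatrix, star_monomialMatrix, monomialMatrix_mul, monomialMatrix_mul]
  simp only [one_mul, star_one, mul_one]
  exact h

theorem isAffine_conj_addRight {f : QV n ≃ QV n} (hf : permGate n f ∈ CliffordLevel n 3)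
    (u : QV n) : IsAffine fun x => f (f.symm x + u) := by
  have h := hf.2 _ (XZGate_mem_pauliGroup u 0)
  rw [XZGate_zero_right, star_permGate, permGate_mul, permGate_mul] at h
  exact permGate_mem_cliffordLevel_two_iff.1 h

/-! ### Partial Hadamard gates -/

section PiKronecker

variable {ι m R : Type*} [Fintype ι] [CommSemiring R]

/-- The Kronecker product of a finite family of square matrices. -/
def piKronecker (A : ι → Matrix m m R) : Matrix (ι → m) (ι → m) R :=
  Matrix.of fun a b => ∏ i, A i (a i) (b i)

theorem piKronecker_mul [DecidableEq ι] [Fintype m] (A B : ι → Matrix m m R) :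
    piKronecker A * piKronecker B = piKronecker fun i => A i * B i := by
  ext a b
  simp only [piKronecker, Matrix.mul_apply, Matrix.of_apply, Finset.prod_univ_sum,
    Finset.prod_mul_distrib, Fintype.piFinset_univ]

theorem piKronecker_one [DecidableEq m] :
    piKronecker (fun _ : ι => (1 : Matrix m m R)) = 1 := by
  ext a b
  simp [piKronecker, Matrix.one_apply, Finset.prod_ite_zero, funext_iff]

theorem piKronecker_smul (c : ι → R) (A : ι → Matrix m m R) :
    (piKronecker fun i => c i • A i) = (∏ i, c i) • piKronecker A := by
  ext a b
  simp [piKronecker, Finset.prod_mul_distrib]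

theorem star_piKronecker [StarRing R] (A : ι → Matrix m m R) :
    star (piKronecker A) = piKronecker fun i => star (A i) := by
  ext a b
  simp [piKronecker, Matrix.star_apply]

end PiKronecker

/-- The one-qubit Hadamard gate. -/
noncomputable def hadamard : Matrix (ZMod 2) (ZMod 2) ℂ :=
  (√2 : ℂ)⁻¹ • Matrix.of fun a b => signChar (a * b)

/-- The one-qubit Pauli gate `X^u Z^z`. -/
noncomputable def pauliXZ (u z : ZMod 2) : Matrix (ZMod 2) (ZMod 2) ℂ :=
  monomialMatrix (· + u) fun b => signChar (z * b)

theorem star_hadamard : star hadamard = hadamard := by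
  ext a b
  simp only [hadamard, star_smul, Matrix.smul_apply, Matrix.star_apply, Matrix.of_apply,
    star_signChar, mul_comm b]
  simp

theorem hadamard_mul_self : hadamard * hadamard = 1 := by
  have hsqrt : (√2 : ℂ)⁻¹ * (√2 : ℂ)⁻¹ = 2⁻¹ := by
    rw [← mul_inv, ← Complex.ofReal_mul, Real.mul_self_sqrt zero_le_two, Complex.ofReal_ofNat]
  have horth (a c : ZMod 2) :
      ∑ b, signChar (a * b) * signChar (b * c) = if a = c then 2 else 0 := by
    rw [show (Finset.univ : Finset (ZMod 2)) = {0, 1} from rfl]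
    obtain rfl | rfl := eq_zero_or_one a <;> obtain rfl | rfl := eq_zero_or_one c <;>
      norm_num [signChar_one]
  ext a c
  calc (hadamard * hadamard) a c
      = (√2 : ℂ)⁻¹ * (√2 : ℂ)⁻¹ * ∑ b, signChar (a * b) * signChar (b * c) := by
        simp only [hadamard, Matrix.smul_apply, Matrix.mul_apply, Matrix.of_apply, smul_eq_mul,
          Finset.mul_sum, mul_mul_mul_comm _ (signChar _)]
    _ = (1 : Matrix (ZMod 2) (ZMod 2) ℂ) a c := by
        simp [hsqrt, horth, Matrix.one_apply]

theorem hadamard_mul_pauliXZ (u z : ZMod 2) :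
    hadamard * pauliXZ u z = signChar (u * z) • (pauliXZ z u * hadamard) := by
  ext a b
  have hrow (c : ZMod 2) : a = c + z ↔ c = a - z := by
    rw [eq_comm, eq_sub_iff_add_eq]
  have hsign : signChar (a * (b + u)) * signChar (z * b) =
      signChar (u * z) * (signChar (u * (a - z)) * signChar ((a - z) * b)) := by
    simp only [← AddChar.map_add_eq_mul, CharTwo.sub_eq_add]
    congr 1
    linear_combination -CharTwo.add_self_eq_zero (u * z)
  simp only [hadamard, pauliXZ, Matrix.smul_apply, Matrix.mul_apply, Matrix.of_apply,
    monomialMatrix_apply, hrow, mul_ite, ite_mul, zero_mul, mul_zero,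
    Finset.sum_ite_eq', Finset.mem_univ, if_true, smul_eq_mul]
  linear_combination (√2 : ℂ)⁻¹ * hsign

theorem XZGate_eq_piKronecker (u z : QV n) :
    XZGate n u z = piKronecker fun i => pauliXZ (u i) (z i) := by
  ext a b
  simp only [XZGate_eq_monomialMatrix, piKronecker, pauliXZ, Matrix.of_apply,
    monomialMatrix_apply, Finset.prod_ite_zero, funext_iff, Pi.add_apply, Finset.mem_univ,
    true_imp_iff, dotProduct, signChar_sum]

/-- The gate applying a Hadamard gate to each qubit in `I`. -/
noncomputable def partialHadamard (I : Finset (Fin n)) : QMat n :=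
  piKronecker fun i => if i ∈ I then hadamard else 1

theorem star_partialHadamard (I : Finset (Fin n)) :
    star (partialHadamard I) = partialHadamard I := by
  simp only [partialHadamard, star_piKronecker, apply_ite star, star_hadamard, star_one]

theorem partialHadamard_mul_self (I : Finset (Fin n)) :
    partialHadamard I * partialHadamard I = 1 := by
  rw [partialHadamard, piKronecker_mul, ← piKronecker_one]
  congr! 2 with i
  by_cases hi : i ∈ I <;> simp [hi, hadamard_mul_self]

theorem partialHadamard_mul_XZGate (I : Finset (Fin n)) (u z : QV n) :
    partialHadamard I * XZGate n u z = signChar (∑ i ∈ I, u i * z i) •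
      (XZGate n (I.piecewise z u) (I.piecewise u z) * partialHadamard I) := by
  have hsign : signChar (∑ i ∈ I, u i * z i) =
      ∏ i, if i ∈ I then signChar (u i * z i) else 1 := by
    rw [signChar_sum, Finset.prod_ite_mem, Finset.univ_inter]
  rw [hsign, partialHadamard, XZGate_eq_piKronecker, XZGate_eq_piKronecker, piKronecker_mul,
    piKronecker_mul, ← piKronecker_smul]
  congr! 2 with i
  by_cases hi : i ∈ I <;> simp [hi, hadamard_mul_pauliXZ]

theorem partialHadamard_mem_cliffordLevel_two (I : Finset (Fin n)) :
    partialHadamard I ∈ CliffordLevel n 2 := by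
  refine ⟨Matrix.mem_unitaryGroup_iff.2 ?_, fun P hP => ?_⟩
  · rw [star_partialHadamard, partialHadamard_mul_self]
  · obtain ⟨c, u, z, hc, rfl⟩ := mem_pauliGroup_iff.1 hP
    refine mem_pauliGroup_iff.2 ⟨c * signChar (∑ i ∈ I, u i * z i), I.piecewise z u,
      I.piecewise u z, mul_signChar_pow_four hc _, ?_⟩
    rw [star_partialHadamard, mul_smul_comm, partialHadamard_mul_XZGate, smul_smul,
      smul_mul_assoc, mul_assoc, partialHadamard_mul_self, mul_one]

/-! ### Shears -/

section Shear

variable {K V V' : Type*} [Ring K] [AddCommGroup V] [Module K V] [AddCommGroup V'] [Module K V']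

/-- Shears along `W`: maps moving every point inside its coset of `W` and translating each coset
rigidly. -/
def IsShear (W : Submodule K V) (s : V → V) : Prop :=
  (∀ x, s x - x ∈ W) ∧ ∀ x, ∀ w ∈ W, s (x + w) = s x + w

theorem IsShear.conj {W : Submodule K V} {s : V → V} (hs : IsShear W s) (e : V' ≃ₗ[K] V) :
    IsShear (W.comap e.toLinearMap) fun x => e.symm (s (e x)) := by
  refine ⟨fun x => ?_, fun x w hw => ?_⟩
  · simpa using hs.1 (e x)
  · simp [hs.2 (e x) (e w) hw]

theorem IsShear.involutive [Module (ZMod 2) V] {W : Submodule K V} {s : V → V}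
    (hs : IsShear W s) : Function.Involutive s := by
  intro x
  have h := hs.2 x (s x - x) (hs.1 x)
  rw [add_sub_cancel, ← add_sub_assoc, ZModModule.add_self, zero_sub, ZModModule.neg_eq_self] at h
  exact h

end Shear

section Coordinates

variable {ι : Type*}

/-- The subspace of `ι → K` of vectors supported on `I`. -/
def coordSubspace (K : Type*) [Semiring K] (I : Finset ι) : Submodule K (ι → K) :=
  Submodule.pi {i | i ∉ I} fun _ => ⊥

theorem mem_coordSubspace {K : Type*} [Semiring K] {I : Finset ι} {v : ι → K} :
    v ∈ coordSubspace K I ↔ ∀ i ∉ I, v i = 0 := by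
  simp [coordSubspace, Submodule.mem_pi]

theorem exists_coordSubspace_comap_eq {K V : Type*} [Field K] [AddCommGroup V] [Module K V]
    [FiniteDimensional K V] [Fintype ι] (hι : Fintype.card ι = Module.finrank K V)
    (W : Submodule K V) :
    ∃ (e : V ≃ₗ[K] (ι → K)) (I : Finset ι), (coordSubspace K I).comap e.toLinearMap = W := by
  classical
  let bQ := Module.finBasis K (V ⧸ W)
  let b := (Module.finBasis K W).sumQuot bQ
  let σ := Fintype.equivOfCardEq ((Module.finrank_eq_card_basis b).symm.trans hι.symm)
  let I : Finset ι := {i | (σ.symm i).isLeft}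
  refine ⟨(b.reindex σ).equivFun, I, Submodule.ext fun v => ?_⟩
  rw [Submodule.mem_comap, mem_coordSubspace, ← Submodule.Quotient.mk_eq_zero,
    ← Submodule.mkQ_apply, ← bQ.forall_coord_eq_zero_iff, σ.symm.forall_congr_left]
  simp [b, I, Module.Basis.sumQuot_repr_inr]

end Coordinates

theorem partialHadamard_apply_eq_zero {I : Finset (Fin n)} {a b : QV n}
    (h : b - a ∉ coordSubspace (ZMod 2) I) : partialHadamard I a b = 0 := by
  simp only [mem_coordSubspace, not_forall] at h
  obtain ⟨i, hi, hba⟩ := h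
  refine Finset.prod_eq_zero (Finset.mem_univ i) ?_
  have hne : a i ≠ b i := fun hab => hba (sub_eq_zero.2 hab.symm)
  simp [hi, hne]

theorem partialHadamard_conj_XZGate {I : Finset (Fin n)} {t : QV n}
    (ht : t ∈ coordSubspace (ZMod 2) I) :
    partialHadamard I * XZGate n 0 t * partialHadamard I = XZGate n t 0 := by
  have h_t : I.piecewise t 0 = t := by
    ext i
    by_cases hi : i ∈ I <;> simp [hi, mem_coordSubspace.1 ht]
  have h_zero : I.piecewise 0 t = 0 := by
    ext i
    by_cases hi : i ∈ I <;> simp [hi, mem_coordSubspace.1 ht]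
  rw [partialHadamard_mul_XZGate, smul_mul_assoc, mul_assoc, partialHadamard_mul_self, mul_one,
    h_t, h_zero]
  simp

/- Row `a` of `H_I` only meets the coset of `a`, on which `s` is the translation by `s a - a`. -/
theorem permGate_eq_partialHadamard_conj {I : Finset (Fin n)} {s : QV n ≃ QV n}
    (hs : IsShear (coordSubspace (ZMod 2) I) s) :
    permGate n s = partialHadamard I * Matrix.diagonal (fun b => signChar ((s b - b) ⬝ᵥ b)) *
      partialHadamard I := by
  ext a c
  have row : (partialHadamard I * Matrix.diagonal fun b => signChar ((s b - b) ⬝ᵥ b)) a =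
      (partialHadamard I * XZGate n 0 (s a - a)) a := by
    ext b
    rw [XZGate_zero_left, Matrix.mul_diagonal, Matrix.mul_diagonal]
    by_cases hb : b - a ∈ coordSubspace (ZMod 2) I
    · have h := hs.2 a (b - a) hb
      rw [add_sub_cancel] at h
      rw [h, ← add_sub_assoc, add_sub_right_comm, add_sub_cancel_right]
    · rw [partialHadamard_apply_eq_zero hb, zero_mul, zero_mul]
  have hac : a = s c ↔ a = c + (s a - a) := by
    rw [← hs.involutive.eq_iff, ← add_sub_assoc, eq_sub_iff_add_eq, ZModModule.add_self,
      eq_comm (a := (0 : QV n)), add_eq_zero_iff_eq_neg, ZModModule.neg_eq_self, eq_comm]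
  rw [Matrix.mul_apply_eq_vecMul, row, ← Matrix.mul_apply_eq_vecMul,
    partialHadamard_conj_XZGate (hs.1 a), XZGate_zero_right]
  exact if_congr hac rfl rfl

/-! ### Semi-Clifford gates -/

theorem _root_.IsSemiClifford.mul_left {U φ : QMat n} (hU : IsSemiClifford n U)
    (hφ : φ ∈ CliffordLevel n 2) : IsSemiClifford n (φ * U) := by
  obtain ⟨φ₁, d, φ₂, h₁, h₂, hd, rfl⟩ := hU
  exact ⟨φ * φ₁, d, φ₂, mul_mem_cliffordLevel_two hφ h₁, h₂, hd, by simp only [mul_assoc]⟩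

theorem _root_.IsSemiClifford.mul_right {U φ : QMat n} (hU : IsSemiClifford n U)
    (hφ : φ ∈ CliffordLevel n 2) : IsSemiClifford n (U * φ) := by
  obtain ⟨φ₁, d, φ₂, h₁, h₂, hd, rfl⟩ := hU
  exact ⟨φ₁, d, φ₂ * φ, h₁, mul_mem_cliffordLevel_two h₂ hφ, hd, by simp only [mul_assoc]⟩

theorem _root_.IsSemiClifford.permGate_comp {f α β : QV n ≃ QV n} (hα : IsAffine α)
    (hβ : IsAffine β) (hf : IsSemiClifford n (permGate n f)) :
    IsSemiClifford n (permGate n ((β.trans f).trans α)) := by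
  rw [← permGate_mul, ← permGate_mul]
  exact (hf.mul_right (permGate_mem_cliffordLevel_two_iff.2 hβ)).mul_left
    (permGate_mem_cliffordLevel_two_iff.2 hα)

theorem IsShear.isSemiClifford_permGate {W : Submodule (ZMod 2) (QV n)} {s : QV n ≃ QV n}
    (hs : IsShear W s) : IsSemiClifford n (permGate n s) := by
  obtain ⟨e, I, rfl⟩ := exists_coordSubspace_comap_eq (ι := Fin n) (by simp) W
  let s' : QV n ≃ QV n := (e.symm.toEquiv.trans s).trans e.toEquiv
  have hs' : IsShear (coordSubspace (ZMod 2) I) s' := by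
    have h := hs.conj e.symm
    rwa [← Submodule.comap_comp, LinearEquiv.comp_symm, Submodule.comap_id] at h
  have hsemi : IsSemiClifford n (permGate n s') :=
    ⟨_, _, _, partialHadamard_mem_cliffordLevel_two I, partialHadamard_mem_cliffordLevel_two I,
      fun _ _ => Matrix.diagonal_apply_ne _, permGate_eq_partialHadamard_conj hs'⟩
  have h := hsemi.permGate_comp (α := e.symm.toEquiv) (β := e.toEquiv)
    (isAffine_of_addMonoidHomClass e.symm) (isAffine_of_addMonoidHomClass e)
  have hss' : (e.toEquiv.trans s').trans e.symm.toEquiv = s := by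
    ext1 x
    simp [s']
  rwa [hss'] at h

/-! ### The multiplication induced by a permutation -/

section NilSquare

variable {K V : Type*} [CommRing K] [AddCommGroup V] [Module K V]

/-- Bilinear multiplications that are commutative and associative and whose squares all vanish. -/
structure IsNilSquareMul (m : V →ₗ[K] V →ₗ[K] V) : Prop where
  comm : ∀ x y, m x y = m y x
  assoc : ∀ x y z, m (m x y) z = m x (m y z)
  self : ∀ x, m x x = 0

/-- The failure `F (u + v) - F u - F v` of additivity, as a function of `x = F u` and `y = F v`. -/
def inducedProduct (F : V ≃ V) (x y : V) : V :=
  F (F.symm x + F.symm y) - x - y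

theorem inducedProduct_comm (F : V ≃ V) (x y : V) :
    inducedProduct F x y = inducedProduct F y x := by
  rw [inducedProduct, inducedProduct, add_comm, sub_right_comm]

theorem map_add_eq_add_inducedProduct (F : V ≃ V) (u v : V) :
    F (u + v) = F u + F v + inducedProduct F (F u) (F v) := by
  simp only [inducedProduct, Equiv.symm_apply_apply]
  abel

theorem inducedProduct_add_right {F : V ≃ V} (h0 : F 0 = 0)
    (hF : ∀ u, IsAffine fun x => F (F.symm x + u)) (x y z : V) :
    inducedProduct F x (y + z) = inducedProduct F x y + inducedProduct F x z := by
  have h := hF (F.symm x) y z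
  have hsymm0 : F.symm 0 = 0 := F.symm_apply_eq.2 h0.symm
  simp only [hsymm0, zero_add, Equiv.apply_symm_apply, ← eq_sub_iff_add_eq] at h
  simp only [inducedProduct, add_comm (F.symm x), h]
  abel

theorem inducedProduct_add_left {F : V ≃ V} (h0 : F 0 = 0)
    (hF : ∀ u, IsAffine fun x => F (F.symm x + u)) (x y z : V) :
    inducedProduct F (x + y) z = inducedProduct F x z + inducedProduct F y z := by
  simp only [inducedProduct_comm F _ z, inducedProduct_add_right h0 hF]

/- Expand `F (u + v + w)` for both bracketings of the sum. -/
theorem inducedProduct_assoc {F : V ≃ V} (h0 : F 0 = 0)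
    (hF : ∀ u, IsAffine fun x => F (F.symm x + u)) (x y z : V) :
    inducedProduct F (inducedProduct F x y) z = inducedProduct F x (inducedProduct F y z) := by
  have h := congrArg F (add_assoc (F.symm x) (F.symm y) (F.symm z))
  simp only [map_add_eq_add_inducedProduct, Equiv.apply_symm_apply, inducedProduct_add_left h0 hF,
    inducedProduct_add_right h0 hF] at h
  rw [← sub_eq_zero] at h ⊢
  rw [← h]
  abel

theorem inducedProduct_self [Module (ZMod 2) V] {F : V ≃ V} (h0 : F 0 = 0) (x : V) :
    inducedProduct F x x = 0 := by
  rw [inducedProduct, ZModModule.add_self, h0, sub_sub, ZModModule.add_self, sub_zero]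

theorem exists_isNilSquareMul [Module (ZMod 2) V] {F : V ≃ V} (h0 : F 0 = 0)
    (hF : ∀ u, IsAffine fun x => F (F.symm x + u)) :
    ∃ m : V →ₗ[ZMod 2] V →ₗ[ZMod 2] V, IsNilSquareMul m ∧
      ∀ u v, F (u + v) = F u + F v + m (F u) (F v) := by
  let left (x : V) : V →+ V :=
    AddMonoidHom.mk' (inducedProduct F x) (inducedProduct_add_right h0 hF x)
  have smul_right (c : ZMod 2) (x y : V) :
      inducedProduct F x (c • y) = c • inducedProduct F x y := ZMod.map_smul (left x) c y
  let m : V →ₗ[ZMod 2] V →ₗ[ZMod 2] V := LinearMap.mk₂ (ZMod 2) (inducedProduct F)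
    (inducedProduct_add_left h0 hF)
    (fun c x y => by rw [inducedProduct_comm, smul_right, inducedProduct_comm])
    (inducedProduct_add_right h0 hF) smul_right
  exact ⟨m, ⟨inducedProduct_comm F, inducedProduct_assoc h0 hF, inducedProduct_self h0⟩,
    map_add_eq_add_inducedProduct F⟩

end NilSquare

/-! ### The dimension of algebras with vanishing squares -/

/- Multiplying a relation by the product over `Sᶜ` kills every term `T` not contained in `S`. -/
theorem linearIndependent_prod_of_mul_self_eq_zero {ι K A : Type*} [Fintype ι] [Field K]
    [CommRing A] [Algebra K A] {x : ι → A} (hx : ∀ i, x i * x i = 0) (hprod : ∏ i, x i ≠ 0) :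
    LinearIndependent K fun S : Finset ι => ∏ i ∈ S, x i := by
  classical
  rw [Fintype.linearIndependent_iff]
  intro g hg S
  induction S using Finset.strongInduction with
  | H S ih =>
  have vanish (T : Finset ι) (hT : T ≠ S) :
      g T • ((∏ i ∈ T, x i) * ∏ i ∈ Sᶜ, x i) = 0 := by
    by_cases hTS : T ⊆ S
    · rw [ih T (hTS.ssubset_of_ne hT), zero_smul]
    · obtain ⟨i, hiT, hiS⟩ := Finset.not_subset.1 hTS
      rw [← Finset.mul_prod_erase T x hiT, ← Finset.mul_prod_erase Sᶜ x (Finset.mem_compl.2 hiS),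
        mul_mul_mul_comm, hx, zero_mul, smul_zero]
  have h := congrArg (· * ∏ i ∈ Sᶜ, x i) hg
  simp only [Finset.sum_mul, smul_mul_assoc, zero_mul] at h
  rw [Finset.sum_eq_single S (fun T _ => vanish T) (by simp), Finset.prod_mul_prod_compl] at h
  exact (smul_eq_zero_iff_left hprod).1 h

theorem two_pow_card_le_finrank_add_one {ι K A : Type*} [Fintype ι] [Field K]
    [NonUnitalCommRing A] [Module K A] [IsScalarTower K A A] [SMulCommClass K A A]
    [FiniteDimensional K A] {x : ι → A} (hx : ∀ i, x i * x i = 0)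
    (hprod : ∏ i, (x i : Unitization K A) ≠ 0) :
    2 ^ Fintype.card ι ≤ Module.finrank K A + 1 := by
  have hsq (i) : (x i : Unitization K A) * x i = 0 := by
    rw [← Unitization.inr_mul, hx, Unitization.inr_zero]
  have e := Unitization.linearEquiv K K A
  have : FiniteDimensional K (Unitization K A) := e.symm.finiteDimensional
  have hfinrank : Module.finrank K (Unitization K A) = Module.finrank K A + 1 := by
    rw [e.finrank_eq, Module.finrank_prod, Module.finrank_self, add_comm]
  have hindep := linearIndependent_prod_of_mul_self_eq_zero (K := K) hsq hprod
  rw [← hfinrank, ← Fintype.card_finset]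
  exact hindep.fintype_card_le_finrank

theorem seven_le_finrank_of_mul_mul_ne_zero {K A : Type*} [Field K] [NonUnitalCommRing A]
    [Module K A] [IsScalarTower K A A] [SMulCommClass K A A] [FiniteDimensional K A] {x y z : A}
    (hx : x * x = 0) (hy : y * y = 0) (hz : z * z = 0) (hxyz : x * (y * z) ≠ 0) :
    7 ≤ Module.finrank K A := by
  have hv (i) : ![x, y, z] i * ![x, y, z] i = 0 := by
    fin_cases i
    exacts [hx, hy, hz]
  have hprod : ∏ i, (![x, y, z] i : Unitization K A) ≠ 0 := by
    rw [Fin.prod_univ_three, mul_assoc, ← Unitization.inr_mul, ← Unitization.inr_mul,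
      ← Unitization.inr_zero K, Unitization.inr_injective.ne_iff]
    exact hxyz
  have h := two_pow_card_le_finrank_add_one hv hprod
  rw [Fintype.card_fin] at h
  omega

theorem IsNilSquareMul.mul_mul_eq_zero {K V : Type*} [Field K] [AddCommGroup V] [Module K V]
    [FiniteDimensional K V] {m : V →ₗ[K] V →ₗ[K] V} (hm : IsNilSquareMul m)
    (hV : Module.finrank K V < 7) (x y z : V) : m x (m y z) = 0 := by
  let _ : NonUnitalCommRing V :=
    { ‹AddCommGroup V› with
      mul := fun x y => m x y
      left_distrib := fun x => map_add (m x)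
      right_distrib := fun x y z => LinearMap.congr_fun (map_add m x y) z
      zero_mul := fun x => LinearMap.congr_fun (map_zero m) x
      mul_zero := fun x => map_zero (m x)
      mul_assoc := hm.assoc
      mul_comm := hm.comm }
  have : IsScalarTower K V V := ⟨fun c x y => LinearMap.congr_fun (map_smul m c x) y⟩
  have : SMulCommClass K V V := ⟨fun c x y => (map_smul (m x) c y).symm⟩
  by_contra hxyz
  exact hV.not_ge (seven_le_finrank_of_mul_mul_ne_zero (hm.self x) (hm.self y) (hm.self z) hxyz)

/-! ### Multiplications of class two -/

section ClassTwo

variable {p : ℕ} {V : Type*} [AddCommGroup V] [Module (ZMod p) V] {W : Submodule (ZMod p) V}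
  {G : V → V}

/- Modulo the image `G W` the map `G` is additive; lift it, and correct the lift on `W`. -/
theorem exists_linearMap_modEq [Fact p.Prime] (hW : ∀ x, ∀ w ∈ W, G (x + w) = G x + G w)
    (hG : ∀ x y, ∃ w ∈ W, G (x + y) + G w = G x + G y) :
    ∃ L : V →ₗ[ZMod p] V, (∀ w ∈ W, L w = G w) ∧ ∀ x, ∃ w ∈ W, G x = L x + G w := by
  let g : W →ₗ[ZMod p] V :=
    (AddMonoidHom.mk' (fun w => G w) fun x w => hW x w w.2 : W →+ V).toZModLinearMap p
  have mkQ_eq_zero {w : V} (hw : w ∈ W) : g.range.mkQ (G w) = 0 :=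
    (Submodule.Quotient.mk_eq_zero _).2 ⟨⟨w, hw⟩, rfl⟩
  let q : V →ₗ[ZMod p] V ⧸ g.range :=
    (AddMonoidHom.mk' (fun x => g.range.mkQ (G x)) fun x y => by
      obtain ⟨w, hw, h⟩ := hG x y
      rw [← map_add, ← h, map_add, mkQ_eq_zero hw, add_zero]).toZModLinearMap p
  obtain ⟨l, hl⟩ := Module.projective_lifting_property g.range.mkQ q g.range.mkQ_surjective
  obtain ⟨π, hπ⟩ := W.subtype.exists_leftInverse_of_injective W.ker_subtype
  let L := l + (g - l ∘ₗ W.subtype) ∘ₗ π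
  refine ⟨L, fun w hw => ?_, fun x => ?_⟩
  · have hπw : π w = ⟨w, hw⟩ := LinearMap.congr_fun hπ ⟨w, hw⟩
    simp [L, hπw, g]
  · have mkQ_l (y : V) : g.range.mkQ (l y) = g.range.mkQ (G y) := LinearMap.congr_fun hl y
    have hmod : g.range.mkQ (G x - L x) = 0 := by
      simp only [L, LinearMap.add_apply, LinearMap.sub_apply, LinearMap.comp_apply, map_sub,
        map_add, mkQ_l, W.subtype_apply, mkQ_eq_zero (π x).2]
      simp [g, mkQ_eq_zero]
    obtain ⟨w, hw⟩ := (Submodule.Quotient.mk_eq_zero _).1 hmod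
    exact ⟨w, w.2, by rw [← sub_eq_iff_eq_add', ← hw]; rfl⟩

theorem exists_linearEquiv_isShear [Fact p.Prime] (hbij : Function.Bijective G)
    (hW : ∀ x, ∀ w ∈ W, G (x + w) = G x + G w)
    (hG : ∀ x y, ∃ w ∈ W, G (x + y) + G w = G x + G y) :
    ∃ L : V ≃ₗ[ZMod p] V, IsShear W fun x => L.symm (G x) := by
  obtain ⟨L, hLW, hL⟩ := exists_linearMap_modEq hW hG
  have hG0 : G 0 = 0 := by simpa using hW 0 0 W.zero_mem
  have hinj : Function.Injective L := by
    refine (injective_iff_map_eq_zero L).2 fun x hx => ?_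
    obtain ⟨w, hw, hxw⟩ := hL x
    obtain rfl : x = w := hbij.1 (by rw [hxw, hx, zero_add])
    exact hbij.1 (by rw [← hLW x hw, hx, hG0])
  have hsurj : Function.Surjective L := fun y => by
    obtain ⟨x, rfl⟩ := hbij.2 y
    obtain ⟨w, hw, hxw⟩ := hL x
    exact ⟨x + w, by rw [map_add, hLW w hw, hxw]⟩
  let e : V ≃ₗ[ZMod p] V := .ofBijective L ⟨hinj, hsurj⟩
  have e_mem {w : V} (hw : w ∈ W) : e w = G w := hLW w hw
  refine ⟨e, fun x => ?_, fun x w hw => ?_⟩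
  · obtain ⟨w, hw, hxw⟩ := hL x
    have h : e.symm (G x) = x + w := by
      rw [e.symm_apply_eq, map_add, e_mem hw]
      exact hxw
    simpa only [h, add_sub_cancel_left] using hw
  · rw [e.symm_apply_eq, map_add, e.apply_symm_apply, e_mem hw, hW x w hw]

end ClassTwo

/- If `m` has class two, all products lie in the annihilator `W` of `m`, along which `F⁻¹` is
additive. -/
theorem exists_isShear_comp_linearEquiv {V : Type*} [AddCommGroup V] [Module (ZMod 2) V]
    {F : V ≃ V} {m : V →ₗ[ZMod 2] V →ₗ[ZMod 2] V} (hm : ∀ x y z, m x (m y z) = 0)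
    (hF : ∀ u v, F (u + v) = F u + F v + m (F u) (F v)) :
    ∃ (W : Submodule (ZMod 2) V) (L : V ≃ₗ[ZMod 2] V), IsShear W (L.toEquiv.trans F) := by
  let W : Submodule (ZMod 2) V := m.flip.ker
  have mem_W {w : V} : w ∈ W ↔ ∀ x, m x w = 0 := LinearMap.ext_iff
  have hmul (x y) : F.symm (x + y + m x y) = F.symm x + F.symm y := by
    rw [F.symm_apply_eq, hF, F.apply_symm_apply, F.apply_symm_apply]
  have hW (x w) (hw : w ∈ W) : F.symm (x + w) = F.symm x + F.symm w := by
    simpa only [mem_W.1 hw x, add_zero] using hmul x w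
  have product_mem (x y) : m x y ∈ W := mem_W.2 fun z => hm z x y
  obtain ⟨L, hL⟩ := exists_linearEquiv_isShear (W := W) F.symm.bijective hW fun x y =>
    ⟨m x y, product_mem x y, by rw [← hW _ _ (product_mem x y), hmul]⟩
  have hsymm : (F.symm.trans L.symm.toEquiv).symm = F.symm.trans L.symm.toEquiv :=
    hL.involutive.symm_eq_self_of_involutive (F.symm.trans L.symm.toEquiv)
  exact ⟨W, L, (congrArg (fun s : V ≃ V => IsShear W s) hsymm).mpr hL⟩

theorem isSemiClifford_permGate_of_mem_cliffordLevel_three {f : QV n ≃ QV n} (hn : n ≤ 6)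
    (hf : permGate n f ∈ CliffordLevel n 3) : IsSemiClifford n (permGate n f) := by
  let F : QV n ≃ QV n := f.trans (Equiv.subRight (f 0))
  have hF (u) : IsAffine fun x => F (F.symm x + u) := by
    have h := ((isAffine_conj_addRight hf u).comp (isAffine_addRight (f 0))).add
      (isAffine_const (-f 0))
    simpa [F, sub_eq_add_neg] using h
  obtain ⟨m, hm, hFm⟩ := exists_isNilSquareMul (F := F) (by simp [F]) hF
  obtain ⟨W, L, hs⟩ := exists_isShear_comp_linearEquiv
    (hm.mul_mul_eq_zero (by rw [Module.finrank_fin_fun]; omega)) hFm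
  have h := hs.isSemiClifford_permGate.permGate_comp (β := L.symm.toEquiv)
    (isAffine_addRight (f 0)) (isAffine_of_addMonoidHomClass L.symm)
  have hfactor : (L.symm.toEquiv.trans (L.toEquiv.trans F)).trans (Equiv.addRight (f 0)) = f := by
    ext1 x
    simp [F]
  rwa [hfactor] at h

/-! ### Seven qubits -/

theorem smul_mem_pauliGroup {c : ℂ} (hc : c ^ 4 = 1) {P : QMat n} (hP : P ∈ PauliGroup n) :
    c • P ∈ PauliGroup n := by
  obtain ⟨c', u, z, hc', rfl⟩ := mem_pauliGroup_iff.1 hP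
  exact mem_pauliGroup_iff.2 ⟨c * c', u, z, by rw [mul_pow, hc, hc', one_mul], smul_smul c c' _⟩

theorem _root_.IsDiagonal.commute_XZGate {d : QMat n} (hd : IsDiagonal n d) (z : QV n) :
    d * XZGate n 0 z = XZGate n 0 z * d := by
  have hdiag : d.IsDiag := fun a b hab => hd a b hab
  rw [XZGate_zero_left, ← hdiag.diagonal_diag, Matrix.diagonal_mul_diagonal,
    Matrix.diagonal_mul_diagonal]
  simp only [mul_comm]

/- For `U = φ₁ d φ₂` these Paulis are the conjugates `φ₂† Z^z φ₂`, since the `Z^z` commute with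
`d`. -/
theorem _root_.IsSemiClifford.exists_injective_pauli {U : QMat n} (hU : IsSemiClifford n U) :
    ∃ p : QV n → QV n × QV n, Function.Injective p ∧
      ∀ z, ∃ P ∈ PauliGroup n, U * XZGate n (p z).1 (p z).2 = P * U := by
  obtain ⟨φ₁, d, φ₂, h₁, h₂, hd, rfl⟩ := hU
  have hφ₁ : star φ₁ * φ₁ = 1 := Matrix.mem_unitaryGroup_iff'.1 h₁.1
  have hφ₂ : φ₂ * star φ₂ = 1 := Matrix.mem_unitaryGroup_iff.1 h₂.1
  have hconj (z : QV n) : ∃ (c : ℂ) (q : QV n × QV n), c ^ 4 = 1 ∧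
      XZGate n 0 z * φ₂ = φ₂ * (c • XZGate n q.1 q.2) := by
    obtain ⟨c, u, w, hc, e⟩ := mem_pauliGroup_iff.1
      ((star_mem_cliffordLevel_two h₂).2 _ (XZGate_mem_pauliGroup 0 z))
    refine ⟨c, (u, w), hc, ?_⟩
    rw [← e, star_star, ← mul_assoc, ← mul_assoc, hφ₂, one_mul]
  choose c p hc hp using hconj
  have c_ne_zero (z) : c z ≠ 0 := ne_zero_pow four_ne_zero (by rw [hc]; exact one_ne_zero)
  refine ⟨p, fun z z' hzz' => ?_, fun z => ?_⟩
  · have h : c z' • (XZGate n 0 z * φ₂) = c z • (XZGate n 0 z' * φ₂) := by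
      rw [hp, hp, hzz', mul_smul_comm, mul_smul_comm, smul_comm]
    have h' := congrArg (· * star φ₂) h
    simp only [smul_mul_assoc, mul_assoc, hφ₂, mul_one] at h'
    exact ((smul_XZGate_inj (c_ne_zero z')).1 h').2.2
  · refine ⟨(c z)⁻¹ • (φ₁ * XZGate n 0 z * star φ₁),
      smul_mem_pauliGroup (by rw [inv_pow, hc, inv_one]) (h₁.2 _ (XZGate_mem_pauliGroup 0 z)), ?_⟩
    rw [smul_mul_assoc, eq_inv_smul_iff₀ (c_ne_zero z)]
    calc c z • (φ₁ * d * φ₂ * XZGate n (p z).1 (p z).2)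
        = φ₁ * d * (φ₂ * (c z • XZGate n (p z).1 (p z).2)) := by
          simp only [mul_smul_comm, mul_assoc]
      _ = φ₁ * (d * XZGate n 0 z) * φ₂ := by simp only [← hp, mul_assoc]
      _ = φ₁ * XZGate n 0 z * (star φ₁ * φ₁) * d * φ₂ := by
          simp only [hd.commute_XZGate, hφ₁, mul_assoc, one_mul]
      _ = φ₁ * XZGate n 0 z * star φ₁ * (φ₁ * d * φ₂) := by simp only [mul_assoc]

theorem map_add_and_dotProduct_eq_of_permGate_mul_XZGate {f : QV n ≃ QV n} {u w : QV n} {P : QMat n}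
    (hP : P ∈ PauliGroup n) (h : permGate n f * XZGate n u w = P * permGate n f) :
    (∀ b, f (b + u) + f 0 = f b + f u) ∧ ∃ w', ∀ b, w ⬝ᵥ b = w' ⬝ᵥ (f b - f 0) := by
  obtain ⟨c, u', w', -, rfl⟩ := mem_pauliGroup_iff.1 hP
  rw [permGate_eq_monomialMatrix, XZGate_eq_monomialMatrix, XZGate_eq_monomialMatrix,
    smul_monomialMatrix, monomialMatrix_mul, monomialMatrix_mul, monomialMatrix_inj fun b => by
      rw [one_mul]; exact signChar_ne_zero _] at h
  obtain ⟨htrans, hsign⟩ := h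
  have htrans (b) : f (b + u) = f b + u' := congrFun htrans b
  have hsign (b) : signChar (w ⬝ᵥ b) = c * signChar (w' ⬝ᵥ f b) := by
    simpa only [one_mul, mul_one] using congrFun hsign b
  have hsign0 : 1 = c * signChar (w' ⬝ᵥ f 0) := by simpa using hsign 0
  refine ⟨fun b => ?_, w', fun b => signChar_injective ?_⟩
  · have hu : f u = f 0 + u' := by simpa using htrans 0
    rw [htrans, hu]
    abel
  · rw [dotProduct_sub, CharTwo.sub_eq_add, AddChar.map_add_eq_mul, hsign]
    linear_combination -c * signChar (w' ⬝ᵥ f b) * signChar_mul_self (w' ⬝ᵥ f 0) -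
      signChar (w' ⬝ᵥ f b) * signChar (w' ⬝ᵥ f 0) * hsign0

/-- The permutation `v ↦ ∏ i, (1 + vᵢ eᵢ) - 1` of the algebra with basis
`e = (x, y, z, xy, xz, yz, xyz)` and relations `x² = y² = z² = 0`. Its induced product is the
multiplication of this algebra, in which `xyz ≠ 0`, so its gate turns out not to be
semi-Clifford. -/
def cubicPerm : QV 7 ≃ QV 7 where
  toFun v := ![v 0, v 1, v 2, v 3 + v 0 * v 1, v 4 + v 0 * v 2, v 5 + v 1 * v 2,
    v 6 + v 0 * v 5 + v 1 * v 4 + v 2 * v 3 + v 0 * v 1 * v 2]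
  invFun v := ![v 0, v 1, v 2, v 3 + v 0 * v 1, v 4 + v 0 * v 2, v 5 + v 1 * v 2,
    v 6 + v 0 * v 5 + v 1 * v 4 + v 2 * v 3]
  left_inv v := by
    funext i
    fin_cases i <;> simp <;> grind
  right_inv v := by
    funext i
    fin_cases i <;> simp <;> grind

theorem isQuadratic_cubicPerm_symm : IsQuadratic cubicPerm.symm := by
  intro u a b
  funext i
  fin_cases i <;> simp [cubicPerm] <;> grind

theorem isAffine_cubicPerm_conj (u : QV 7) :
    IsAffine fun x => cubicPerm (cubicPerm.symm x + u) := by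
  intro a b
  funext i
  fin_cases i <;> simp [cubicPerm] <;> grind

theorem cubicPerm_zero : cubicPerm 0 = 0 := by
  decide

theorem eq_zero_of_cubicPerm_add {u : QV 7}
    (hu : ∀ b, cubicPerm (b + u) = cubicPerm b + cubicPerm u) : ∀ i ≠ 6, u i = 0 := by
  have h01 := congrFun (hu (Pi.single 0 1)) 3
  have h02 := congrFun (hu (Pi.single 0 1)) 4
  have h05 := congrFun (hu (Pi.single 0 1)) 6
  have h10 := congrFun (hu (Pi.single 1 1)) 3
  have h14 := congrFun (hu (Pi.single 1 1)) 6
  have h23 := congrFun (hu (Pi.single 2 1)) 6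
  simp [cubicPerm] at h01 h02 h05 h10 h14 h23
  have hu0 : u 0 = 0 := by grind
  have hu1 : u 1 = 0 := by grind
  have hu2 : u 2 = 0 := by grind
  have hu3 : u 3 = 0 := by grind
  have hu4 : u 4 = 0 := by grind
  have hu5 : u 5 = 0 := by grind
  intro i hi
  fin_cases i <;> first | assumption | exact absurd rfl hi

theorem eq_zero_of_dotProduct_cubicPerm {w w' : QV 7} (hw : ∀ b, w ⬝ᵥ b = w' ⬝ᵥ cubicPerm b) :
    ∀ i ≥ 3, w i = 0 := by
  have h0 := hw (Pi.single 0 1)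
  have h1 := hw (Pi.single 1 1)
  have h2 := hw (Pi.single 2 1)
  have h3 := hw (Pi.single 3 1)
  have h4 := hw (Pi.single 4 1)
  have h5 := hw (Pi.single 5 1)
  have h6 := hw (Pi.single 6 1)
  have h01 := hw (Pi.single 0 1 + Pi.single 1 1)
  have h02 := hw (Pi.single 0 1 + Pi.single 2 1)
  have h12 := hw (Pi.single 1 1 + Pi.single 2 1)
  have h05 := hw (Pi.single 0 1 + Pi.single 5 1)
  simp [cubicPerm, dotProduct, Fin.sum_univ_succ] at h0 h1 h2 h3 h4 h5 h6 h01 h02 h12 h05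
  have hw3 : w 3 = 0 := by grind
  have hw4 : w 4 = 0 := by grind
  have hw5 : w 5 = 0 := by grind
  have hw6 : w 6 = 0 := by grind
  intro i hi
  fin_cases i <;> first | assumption | exact absurd hi (by decide)

theorem permGate_cubicPerm_mem_cliffordLevel_three :
    permGate 7 cubicPerm ∈ CliffordLevel 7 3 :=
  permGate_mem_cliffordLevel_three isAffine_cubicPerm_conj isQuadratic_cubicPerm_symm

theorem not_isSemiClifford_permGate_cubicPerm : ¬ IsSemiClifford 7 (permGate 7 cubicPerm) := by
  intro hsemi
  obtain ⟨p, hp, hpauli⟩ := hsemi.exists_injective_pauli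
  have translation_part (z) : ∀ i ≠ 6, (p z).1 i = 0 := by
    obtain ⟨P, hP, h⟩ := hpauli z
    have hadd := (map_add_and_dotProduct_eq_of_permGate_mul_XZGate hP h).1
    simp only [cubicPerm_zero, add_zero] at hadd
    exact eq_zero_of_cubicPerm_add hadd
  have sign_part (z) : ∀ i ≥ 3, (p z).2 i = 0 := by
    obtain ⟨P, hP, h⟩ := hpauli z
    obtain ⟨w', hw'⟩ := (map_add_and_dotProduct_eq_of_permGate_mul_XZGate hP h).2
    simp only [cubicPerm_zero, sub_zero] at hw'
    exact eq_zero_of_dotProduct_cubicPerm hw'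
  have hinj : Function.Injective fun z => ((p z).1 6, (p z).2 0, (p z).2 1, (p z).2 2) := by
    intro z z' h
    simp only [Prod.mk.injEq] at h
    refine hp (Prod.ext (funext fun i => ?_) (funext fun i => ?_))
    · by_cases hi : i = 6
      · rw [hi, h.1]
      · rw [translation_part z i hi, translation_part z' i hi]
    · by_cases hi : 3 ≤ i
      · rw [sign_part z i hi, sign_part z' i hi]
      · obtain rfl | rfl | rfl : i = 0 ∨ i = 1 ∨ i = 2 := by omega
        exacts [h.2.1, h.2.2.1, h.2.2.2]
  simpa [ZMod.card] using Fintype.card_le_of_injective _ hinj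

end PermutationGate

/-- For every `n ≤ 6`, every permutation gate in `𝒞₃` on `n` qubits is
semi-Clifford, while on `7` qubits there is a permutation gate in `𝒞₃` that is not
semi-Clifford; so `7` is the smallest such number of qubits. -/
theorem stmt18 :
    (∀ n : ℕ, 1 ≤ n → n ≤ 6 → ∀ f : QV n ≃ QV n,
      permGate n f ∈ CliffordLevel n 3 → IsSemiClifford n (permGate n f)) ∧
    (∃ f : QV 7 ≃ QV 7,
      permGate 7 f ∈ CliffordLevel 7 3 ∧ ¬ IsSemiClifford 7 (permGate 7 f)) := by
  exact ⟨fun n _ hn f hf =>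
      PermutationGate.isSemiClifford_permGate_of_mem_cliffordLevel_three hn hf,
    PermutationGate.cubicPerm, PermutationGate.permGate_cubicPerm_mem_cliffordLevel_three,
    PermutationGate.not_isSemiClifford_permGate_cubicPerm⟩
end
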